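/- Let n ≥ 3 be an integer, let a ≠ 0 and C ∈ ℝ, and define u : ℝ → ℝ by u(s) = C − ((n−2)/(2a))·exp(−2·a·s/(n−2)). Then the function s ↦ (n−1)·(u(s)·u''(s) − u'(s)²) + a·u(s)·u'(s) is not constant on ℝ. -/

import Mathlib

/-- The function `s ↦ C - (m / (2a)) e^{-2as/m}` has derivative `e^{-2as/m}`. -/
theorem hasDerivAt_sub_mul_exp {m a : ℝ} (hm : m ≠ 0) (ha : a ≠ 0) (C s : ℝ) :
    HasDerivAt (fun s : ℝ => C - (m / (2 * a)) * Real.exp (-2 * a * s / m))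
      (Real.exp (-2 * a * s / m)) s := by
  have h := (((((hasDerivAt_id s).const_mul (-2 * a)).div_const m).exp).const_mul
    (m / (2 * a))).const_sub C
  refine h.congr_deriv ?_
  simp only [id]
  field_simp

theorem hasDerivAt_exp_mul_div (a m s : ℝ) :
    HasDerivAt (fun s : ℝ => Real.exp (-2 * a * s / m))
      (Real.exp (-2 * a * s / m) * (-2 * a / m)) s := by
  simpa using (((hasDerivAt_id s).const_mul (-2 * a)).div_const m).exp

/-- For `u(s) = C − ((n−2)/(2a))·e^{−2as/(n−2)}` with `a ≠ 0`, the would-be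
soliton coefficient `(n−1)·(u·u'' − (u')²) + a·u·u'` is not constant on `ℝ`. -/
theorem stmt_14 (n : ℕ) (hn : 3 ≤ n) (a C : ℝ) (ha : a ≠ 0)
    (u : ℝ → ℝ)
    (hu : u = fun s : ℝ =>
      C - ((n - 2) / (2 * a)) * Real.exp (-2 * a * s / (n - 2))) :
    ¬ ∃ K : ℝ, ∀ s : ℝ,
      (n - 1) * (u s * deriv (deriv u) s - (deriv u s) ^ 2) +
        a * u s * deriv u s = K := by
  rintro ⟨K, hK⟩
  have hn' : (3 : ℝ) ≤ n := by exact_mod_cast hn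
  obtain ⟨m, hm⟩ : ∃ m : ℝ, (n : ℝ) - 2 = m := ⟨_, rfl⟩
  have hm0 : m ≠ 0 := by linarith
  have hn1 : (n : ℝ) - 1 = m + 1 := by linarith
  rw [hm] at hu
  have hd : deriv u = fun s => Real.exp (-2 * a * s / m) := by
    rw [hu]
    exact funext fun s => (hasDerivAt_sub_mul_exp hm0 ha C s).deriv
  have hdd : ∀ s, deriv (deriv u) s = Real.exp (-2 * a * s / m) * (-2 * a / m) := by
    rw [hd]
    exact fun s => (hasDerivAt_exp_mul_div a m s).deriv
  -- The coefficient is a quadratic polynomial in the exponential, which takes every positive value.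
  have hquad : ∀ t : ℝ, 0 < t → a * C * (1 - 2 * (m + 1) / m) * t - m / 2 * t ^ 2 = K := by
    intro t ht
    have hexp : Real.exp (-2 * a * (-m * Real.log t / (2 * a)) / m) = t := by
      rw [show -2 * a * (-m * Real.log t / (2 * a)) / m = Real.log t by field_simp,
        Real.exp_log ht]
    rw [← hK (-m * Real.log t / (2 * a)), hdd, hd, hu, hn1]
    simp only [hexp]
    field_simp
    ring
  have h₁ := hquad 1 (by norm_num)
  have h₂ := hquad 2 (by norm_num)
  have h₃ := hquad 3 (by norm_num)
  exact hm0 (by linarith)
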